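/- A word g is good if and only if g = l_1 · l_2 ⋯ l_k (concatenation) for some k ≥ 0 and some good Lyndon words l_1 ≥ l_2 ≥ ⋯ ≥ l_k (nonincreasing in the lexicographic order). -/

import Mathlib

open scoped BigOperators

noncomputable section

/-- The field `ℚ(q)` of rational functions over `ℚ`. -/
abbrev K : Type := RatFunc ℚ

/-- The indeterminate `q`. -/
abbrev qq : K := RatFunc.X

/-- Words on the alphabet `{w_1, …, w_r}` (the free monoid `M`). -/
abbrev Word (r : ℕ) := List (Fin r)

/-- The space `F` with basis the words, as finitely supported families of coefficients. -/
abbrev FA (r : ℕ) := Word r →₀ K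

variable {r : ℕ}

/-- `(|w|, |x|)` : the symmetric bilinear form evaluated on the degrees of two words,
where `p i j = (α_i, α_j)` is the form on simple roots. -/
def pairW (p : Fin r → Fin r → ℤ) (w x : Word r) : ℤ :=
  (w.map fun i => (x.map fun j => p i j).sum).sum

/-- Auxiliary q-shuffle on *reversed* words:
`shAux p w x` is the q-shuffle of `w.reverse` and `x.reverse`; it implements the recursion
`(w·a) * (x·b) = (w * (x·b))·a + q^{-(|w·a|,|b|)} ((w·a) * x)·b`, `w[] * x = x * w[] = x`. -/
def shAux (p : Fin r → Fin r → ℤ) : Word r → Word r → FA r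
  | [], x => Finsupp.single x.reverse 1
  | w, [] => Finsupp.single w.reverse 1
  | a :: w, b :: x =>
      Finsupp.mapDomain (fun u => u ++ [a]) (shAux p w (b :: x))
      + (qq ^ (-(pairW p (a :: w) [b]))) •
          Finsupp.mapDomain (fun u => u ++ [b]) (shAux p (a :: w) x)
  termination_by w x => w.length + x.length
  decreasing_by all_goals (first | (simp only [List.length_cons]; omega) | omega)

/-- The q-shuffle product `*` on `F`, extended bilinearly from words. -/
def shuffle (p : Fin r → Fin r → ℤ) (f g : FA r) : FA r :=
  f.sum fun w c => g.sum fun x d => (c * d) • shAux p w.reverse x.reverse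

/-- Membership in `𝒰`, the `ℚ(q)`-subalgebra of `(F, *)` generated by the letters `w_i`. -/
inductive InU (p : Fin r → Fin r → ℤ) : FA r → Prop
  | letter (i : Fin r) : InU p (Finsupp.single [i] 1)
  | one : InU p (Finsupp.single ([] : Word r) 1)
  | add : ∀ {f g : FA r}, InU p f → InU p g → InU p (f + g)
  | smul : ∀ (c : K) {f : FA r}, InU p f → InU p (c • f)
  | mul : ∀ {f g : FA r}, InU p f → InU p g → InU p (shuffle p f g)

/-- The degree of a word in `Q⁺`, recorded as the multiplicity of each simple root. -/
def deg (w : Word r) : Fin r → ℕ := fun i => w.count i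

/-- `f` is homogeneous of degree `ν`. -/
def Homog (f : FA r) (ν : Fin r → ℕ) : Prop := ∀ w ∈ f.support, deg w = ν

/-- Lexicographic order on words (a proper left factor is smaller than the word). -/
def wlt (w x : Word r) : Prop := List.Lex (· < ·) w x

def wle (w x : Word r) : Prop := wlt w x ∨ w = x

/-- `g` is the lexicographically largest word occurring (with nonzero coefficient) in `f`. -/
def IsMaxWord (f : FA r) (g : Word r) : Prop :=
  f g ≠ 0 ∧ ∀ w ∈ f.support, wle w g

/-- Good words: words of the form `max(u)` for a nonzero homogeneous `u ∈ 𝒰`. -/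
def IsGood (p : Fin r → Fin r → ℤ) (g : Word r) : Prop :=
  ∃ u : FA r, InU p u ∧ (∃ ν, Homog u ν) ∧ IsMaxWord u g

/-- Lyndon words: nonempty words smaller than all their proper nonempty right factors. -/
def IsLyndon (l : Word r) : Prop :=
  l ≠ [] ∧ ∀ u v : Word r, l = u ++ v → u ≠ [] → v ≠ [] → wlt l v

/-- The data of the Cartan matrix `[a_{ij}]` of a finite-dimensional complex simple
Lie algebra of rank `r`: an integral matrix with `2` on the diagonal and nonpositive
off-diagonal entries, symmetrizable by `d_i ∈ {1,2,3}`, whose symmetrization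
`(α_i, α_j) = d_i a_{ij}` is positive definite, and which is indecomposable. -/
structure CartanData (r : ℕ) where
  a : Fin r → Fin r → ℤ
  d : Fin r → ℤ
  diag : ∀ i, a i i = 2
  offdiag : ∀ i j, i ≠ j → a i j ≤ 0
  dval : ∀ i, d i = 1 ∨ d i = 2 ∨ d i = 3
  dsymm : ∀ i j, d i * a i j = d j * a j i
  posdef : ∀ v : Fin r → ℚ, v ≠ 0 → 0 < ∑ i, ∑ j, v i * v j * ((d i * a i j : ℤ) : ℚ)
  indec : ∀ s : Finset (Fin r), s.Nonempty → s ≠ Finset.univ →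
    ∃ i ∈ s, ∃ j, j ∉ s ∧ a i j ≠ 0

/-- The symmetric bilinear form `(α_i, α_j) = d_i a_{ij}` on simple roots. -/
def CartanData.p (C : CartanData r) : Fin r → Fin r → ℤ := fun i j => C.d i * C.a i j

/-! ### Lexicographic order -/

theorem wlt_iff (w x : Word r) : wlt w x ↔ w < x := Iff.rfl

theorem wle_iff (w x : Word r) : wle w x ↔ w ≤ x := by
  unfold wle
  rw [wlt_iff, le_iff_lt_or_eq]

theorem lex_dichotomy (u c : Word r) (h : u < c) :
    u <+: c ∨ ∀ s t : Word r, u ++ s < c ++ t := by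
  induction u generalizing c with
  | nil => left; exact ⟨c, rfl⟩
  | cons a u ih =>
    cases c with
    | nil => exact absurd h (List.not_lt_nil _)
    | cons b c =>
      rcases List.cons_lt_cons_iff.1 h with h1 | ⟨rfl, h1⟩
      · right
        intro s t
        exact List.cons_lt_cons_iff.2 (Or.inl h1)
      · rcases ih c h1 with h2 | h2
        · left
          exact (List.prefix_cons_inj a).2 h2
        · right
          intro s t
          exact List.cons_lt_cons_iff.2 (Or.inr ⟨rfl, h2 s t⟩)

theorem append_lt_append_of_length (u c : Word r) (h : u < c) (hl : c.length ≤ u.length)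
    (s t : Word r) : u ++ s < c ++ t := by
  rcases lex_dichotomy u c h with h1 | h1
  · exact absurd (h1.eq_of_length_le hl) h.ne
  · exact h1 s t

theorem cons_le_iff {a b : Fin r} {u v : Word r} :
    a :: u ≤ b :: v ↔ a < b ∨ a = b ∧ u ≤ v := by
  rw [le_iff_lt_or_eq, List.cons_lt_cons_iff, le_iff_lt_or_eq, List.cons.injEq]
  tauto

theorem append_lt_left (a u v : Word r) (h : u < v) : a ++ u < a ++ v := by
  induction a with
  | nil => exact h
  | cons b a ih => exact List.cons_lt_cons_iff.2 (Or.inr ⟨rfl, ih⟩)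

theorem le_append (u v : Word r) : u ≤ u ++ v := by
  induction u with
  | nil => exact not_lt.1 (List.not_lt_nil _)
  | cons b a ih =>
    rcases ih.lt_or_eq with h | h
    · exact le_of_lt (List.cons_lt_cons_iff.2 (Or.inr ⟨rfl, h⟩))
    · rw [List.cons_append, ← h]

/-! ### Lyndon factorization -/

theorem lyndon_append (u v : Word r) (hu : IsLyndon u) (hv : IsLyndon v) (h : u < v) :
    IsLyndon (u ++ v) := by
  have key : u ++ v < v := by
    rcases lex_dichotomy u v h with ⟨m, hm⟩ | h1
    · have hm0 : m ≠ [] := by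
        rintro rfl
        rw [List.append_nil] at hm
        exact h.ne hm
      have h2 : v < m := hv.2 u m hm.symm hu.1 hm0
      have h3 := append_lt_left u v m h2
      rwa [hm] at h3
    · simpa using h1 v []
  refine ⟨by simp [hu.1], ?_⟩
  intro x y hxy hx hy
  rw [wlt_iff]
  rcases List.append_eq_append_iff.1 hxy with ⟨c, hc, hc'⟩ | ⟨c, hc, hc'⟩
  · by_cases h0 : c = []
    · subst h0
      simp only [List.nil_append] at hc'
      rw [← hc']; exact key
    · exact key.trans (hv.2 c y hc' h0 hy)
  · by_cases h0 : c = []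
    · subst h0
      simp only [List.nil_append] at hc'
      rw [hc']; exact key
    · have h2 : u < c := hu.2 x c hc hx h0
      rw [hc']
      refine append_lt_append_of_length u c h2 ?_ v v
      rw [hc]; simp

theorem lyndon_insert (L : List (Word r)) (hL : ∀ l ∈ L, IsLyndon l)
    (hc : List.IsChain (fun a b : Word r => wle b a) L) (u : Word r) (hu : IsLyndon u) :
    ∃ L' : List (Word r), (∀ l ∈ L', IsLyndon l) ∧
      List.IsChain (fun a b : Word r => wle b a) L' ∧ u ++ L.flatten = L'.flatten := by
  induction L generalizing u with
  | nil => exact ⟨[u], by simpa using hu, by simp, by simp⟩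
  | cons v L ih =>
    by_cases h : v ≤ u
    · refine ⟨u :: v :: L, ?_, ?_, by simp⟩
      · intro l hl
        rcases List.mem_cons.1 hl with rfl | hl
        · exact hu
        · exact hL l hl
      · exact List.isChain_cons_cons.2 ⟨(wle_iff _ _).2 h, hc⟩
    · obtain ⟨L', h1, h2, h3⟩ := ih (fun l hl => hL l (List.mem_cons_of_mem _ hl)) hc.tail
        (u ++ v) (lyndon_append u v hu (hL v (by simp)) (not_le.1 h))
      exact ⟨L', h1, h2, by rw [← h3]; simp⟩

theorem lyndon_singleton (a : Fin r) : IsLyndon [a] := by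
  refine ⟨by simp, ?_⟩
  intro u v h hu hv
  have := congrArg List.length h
  have h1 := List.length_pos_iff.2 hu
  have h2 := List.length_pos_iff.2 hv
  simp at this
  omega

theorem lyndon_factorization (w : Word r) :
    ∃ L : List (Word r), (∀ l ∈ L, IsLyndon l) ∧
      List.IsChain (fun a b : Word r => wle b a) L ∧ w = L.flatten := by
  induction w with
  | nil => exact ⟨[], by simp, by simp, by simp⟩
  | cons a w ih =>
    obtain ⟨L, h1, h2, h3⟩ := ih
    obtain ⟨L', h4, h5, h6⟩ := lyndon_insert L h1 h2 [a] (lyndon_singleton a)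
    exact ⟨L', h4, h5, by rw [← h6, ← h3]; rfl⟩

/-! ### Combinatorial shuffles -/

/-- `Shuf w x z`: the word `z` is a shuffle of `w` and `x`. -/
inductive Shuf : Word r → Word r → Word r → Prop
  | nil : Shuf [] [] []
  | left (a : Fin r) {w x z : Word r} : Shuf w x z → Shuf (a :: w) x (a :: z)
  | right (a : Fin r) {w x z : Word r} : Shuf w x z → Shuf w (a :: x) (a :: z)

theorem Shuf.append (w x : Word r) : Shuf w x (w ++ x) := by
  induction w with
  | nil =>
    induction x with
    | nil => exact Shuf.nil
    | cons a x ih => exact Shuf.right a ih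
  | cons a w ih => exact Shuf.left a ih

theorem Shuf.perm {w x z : Word r} (h : Shuf w x z) : z.Perm (w ++ x) := by
  induction h with
  | nil => simp
  | left a h ih => exact ih.cons a
  | right a h ih => exact (ih.cons a).trans List.perm_middle.symm

theorem Shuf.mono {w' x' z' : Word r} (h : Shuf w' x' z') :
    ∀ w x : Word r, w.length = w'.length → x.length = x'.length → w' ≤ w → x' ≤ x →
      ∃ z, Shuf w x z ∧ z' ≤ z ∧ (z' = z → w' = w ∧ x' = x) := by
  induction h with
  | nil =>
    intro w x hw hx _ _
    rw [List.length_nil, List.length_eq_zero_iff] at hw hx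
    subst hw; subst hx
    exact ⟨[], Shuf.nil, le_rfl, fun _ => ⟨rfl, rfl⟩⟩
  | @left a w' x' z' h ih =>
    intro w x hw hx hlw hlx
    cases w with
    | nil => simp at hw
    | cons b w =>
      have hw2 : w.length = w'.length := by simpa using hw
      rcases cons_le_iff.1 hlw with h1 | ⟨rfl, h1⟩
      · have h3 : a :: z' < b :: (w ++ x) := List.cons_lt_cons_iff.2 (Or.inl h1)
        exact ⟨b :: (w ++ x), Shuf.left b (Shuf.append w x), h3.le, fun h4 => absurd h4 h3.ne⟩
      · obtain ⟨z, hz1, hz2, hz3⟩ := ih w x hw2 hx h1 hlx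
        refine ⟨a :: z, Shuf.left a hz1, cons_le_iff.2 (Or.inr ⟨rfl, hz2⟩), ?_⟩
        intro h4
        obtain ⟨h5, h6⟩ := hz3 (List.cons.inj h4).2
        exact ⟨by rw [h5], h6⟩
  | @right a w' x' z' h ih =>
    intro w x hw hx hlw hlx
    cases x with
    | nil => simp at hx
    | cons b x =>
      have hx2 : x.length = x'.length := by simpa using hx
      rcases cons_le_iff.1 hlx with h1 | ⟨rfl, h1⟩
      · have h3 : a :: z' < b :: (w ++ x) := List.cons_lt_cons_iff.2 (Or.inl h1)
        exact ⟨b :: (w ++ x), Shuf.right b (Shuf.append w x), h3.le, fun h4 => absurd h4 h3.ne⟩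
      · obtain ⟨z, hz1, hz2, hz3⟩ := ih w x hw hx2 hlw h1
        refine ⟨a :: z, Shuf.right a hz1, cons_le_iff.2 (Or.inr ⟨rfl, hz2⟩), ?_⟩
        intro h4
        obtain ⟨h5, h6⟩ := hz3 (List.cons.inj h4).2
        exact ⟨h5, by rw [h6]⟩

/-! ### Numerical values of words -/

/-- The base used to encode words as numbers. -/
def base (r : ℕ) : ℚ := (r : ℚ) + 2

theorem one_lt_base : 1 < base r := by
  unfold base
  have : (0 : ℚ) ≤ r := Nat.cast_nonneg r
  linarith

theorem base_pos : 0 < base r := lt_trans one_pos one_lt_base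

theorem one_le_pow_base (n : ℕ) : 1 ≤ base r ^ n := one_le_pow₀ one_lt_base.le

/-- The number whose digits are the letters of the word. -/
def val : Word r → ℚ
  | [] => 0
  | a :: w => (a.val : ℚ) * base r ^ w.length + val w

theorem val_append (u v : Word r) : val (u ++ v) = val u * base r ^ v.length + val v := by
  induction u with
  | nil => simp [val]
  | cons a u ih => simp only [List.cons_append, val, ih, List.length_append, pow_add]; ring

theorem val_nonneg (u : Word r) : 0 ≤ val u := by
  induction u with
  | nil => simp [val]
  | cons a u ih =>
    have := base_pos (r := r)
    simp only [val]; positivity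

theorem val_lt (u : Word r) : val u < base r ^ u.length := by
  induction u with
  | nil => simp [val]
  | cons a u ih =>
    have h1 : (a.val : ℚ) + 1 ≤ base r := by
      have : (a.val : ℚ) ≤ r := by exact_mod_cast a.2.le
      unfold base; linarith
    have h2 : 0 < base r ^ u.length := pow_pos base_pos _
    simp only [val, List.length_cons, pow_succ]
    nlinarith

theorem val_strictMono (u v : Word r) (hl : u.length = v.length) (h : u < v) :
    val u < val v := by
  induction u generalizing v with
  | nil =>
    cases v with
    | nil => exact absurd h (lt_irrefl _)
    | cons b v => simp at hl
  | cons a u ih =>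
    cases v with
    | nil => simp at hl
    | cons b v =>
      have hl2 : u.length = v.length := by simpa using hl
      rcases List.cons_lt_cons_iff.1 h with h1 | ⟨rfl, h1⟩
      · have h2 : (a.val : ℚ) + 1 ≤ b.val := by exact_mod_cast h1
        have h3 := val_lt u
        have h4 := val_nonneg v
        have h5 : 0 < base r ^ v.length := pow_pos base_pos _
        simp only [val]
        rw [hl2] at h3 ⊢
        nlinarith
      · simp only [val, hl2]
        have := ih v hl2 h1
        linarith

theorem val_mono (u v : Word r) (hl : u.length = v.length) (h : u ≤ v) : val u ≤ val v := by
  rcases h.lt_or_eq with h | h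
  · exact (val_strictMono u v hl h).le
  · rw [h]

/-- The defect of a word with respect to a slope `c`. -/
def dft (c : ℚ) (u : Word r) : ℚ := val u - c * (base r ^ u.length - 1)

theorem dft_append (c : ℚ) (u v : Word r) :
    dft c (u ++ v) = dft c u * base r ^ v.length + dft c v := by
  simp only [dft, val_append, List.length_append, pow_add]; ring

theorem dft_nil (c : ℚ) : dft c ([] : Word r) = 0 := by simp [dft, val]

theorem Shuf.snoc_cases {w x z : Word r} (h : Shuf w x z) :
    (w = [] ∧ x = [] ∧ z = []) ∨
    (∃ a w' z', w = w' ++ [a] ∧ z = z' ++ [a] ∧ Shuf w' x z') ∨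
    (∃ a x' z', x = x' ++ [a] ∧ z = z' ++ [a] ∧ Shuf w x' z') := by
  induction h with
  | nil => left; exact ⟨rfl, rfl, rfl⟩
  | @left b w x z h ih =>
    right
    rcases ih with ⟨rfl, rfl, rfl⟩ | ⟨a, w', z', rfl, rfl, h1⟩ | ⟨a, x', z', rfl, rfl, h1⟩
    · left; exact ⟨b, [], [], rfl, rfl, Shuf.nil⟩
    · left; exact ⟨a, b :: w', b :: z', rfl, rfl, Shuf.left b h1⟩
    · right; exact ⟨a, x', b :: z', rfl, rfl, Shuf.left b h1⟩
  | @right b w x z h ih =>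
    right
    rcases ih with ⟨rfl, rfl, rfl⟩ | ⟨a, w', z', rfl, rfl, h1⟩ | ⟨a, x', z', rfl, rfl, h1⟩
    · right; exact ⟨b, [], [], rfl, rfl, Shuf.nil⟩
    · left; exact ⟨a, w', b :: z', rfl, rfl, Shuf.right b h1⟩
    · right; exact ⟨a, b :: x', b :: z', rfl, rfl, Shuf.right b h1⟩

/-- The key estimate: shuffling words all of whose left factors have nonpositive defect. -/
theorem dft_shuf (c : ℚ) (n : ℕ) : ∀ w x z : Word r, z.length = n → Shuf w x z →
    (∀ t, t <+: w → dft c t ≤ 0) → (∀ t, t <+: x → dft c t ≤ 0) →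
    dft c z ≤ dft c w + dft c x := by
  have hB := one_lt_base (r := r)
  induction n with
  | zero =>
    intro w x z hn h _ _
    rw [List.length_eq_zero_iff] at hn
    subst hn
    cases h
    simp [dft_nil]
  | succ n ih =>
    intro w x z hn h hw hx
    rcases h.snoc_cases with ⟨rfl, rfl, rfl⟩ | ⟨a, w', z', rfl, rfl, h1⟩ | ⟨a, x', z', rfl, rfl, h1⟩
    · simp [dft_nil]
    · have h2 := ih w' x z' (by simpa using hn) h1
        (fun t ht => hw t (ht.trans (List.prefix_append _ _))) hx
      have h3 := hx x (List.prefix_refl x)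
      rw [dft_append, dft_append]
      simp only [List.length_singleton, pow_one]
      nlinarith
    · have h2 := ih w x' z' (by simpa using hn) h1 hw
        (fun t ht => hx t (ht.trans (List.prefix_append _ _)))
      have h3 := hw w (List.prefix_refl w)
      rw [dft_append, dft_append]
      simp only [List.length_singleton, pow_one]
      nlinarith

/-- The slope of a word. -/
def wslope (l : Word r) : ℚ := val l / (base r ^ l.length - 1)

theorem pow_sub_pos (l : Word r) (h : l ≠ []) : 0 < base r ^ l.length - 1 := by
  have := one_lt_pow₀ (one_lt_base (r := r)) (n := l.length)
    (by simpa [List.length_eq_zero_iff] using h)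
  linarith

theorem dft_slope_self (l : Word r) (h : l ≠ []) : dft (wslope l) l = 0 := by
  have := (pow_sub_pos l h).ne'
  unfold dft wslope
  field_simp
  ring

theorem dft_slope_le (l t : Word r) (h : l ≠ [])
    (h1 : val (t ++ l) ≤ val (l ++ t)) : dft (wslope l) t ≤ 0 := by
  have := pow_sub_pos l h
  rw [val_append, val_append] at h1
  have e : dft (wslope l) t * (base r ^ l.length - 1)
      = val t * (base r ^ l.length - 1) - val l * (base r ^ t.length - 1) := by
    have := this.ne'
    unfold dft wslope
    field_simp
  by_contra h2
  have := mul_pos (not_le.1 h2) this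
  rw [e] at this
  linarith

theorem dft_pre_le (l t : Word r) (hl : IsLyndon l) (ht : t <+: l) :
    dft (wslope l) t ≤ 0 := by
  obtain ⟨s, hs⟩ := ht
  by_cases h0 : t = []
  · subst h0; rw [dft_nil]
  by_cases h1 : s = []
  · subst h1
    rw [List.append_nil] at hs
    subst hs
    rw [dft_slope_self t h0]
  refine dft_slope_le l t hl.1 (val_mono _ _ (by simp [add_comm]) ?_)
  have h2 : l < s := hl.2 t s hs.symm h0 h1
  have h3 := append_lt_left t _ _ (h2.trans_le (le_append s t))
  rw [← List.append_assoc, hs] at h3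
  exact h3.le

theorem slope_mono (m l : Word r) (hm : IsLyndon m) (hl : IsLyndon l) (h : m ≤ l) :
    wslope m ≤ wslope l := by
  have key : dft (wslope l) m ≤ 0 := by
    rcases h.lt_or_eq with h | h
    · rcases lex_dichotomy m l h with h1 | h1
      · exact dft_pre_le l m hl h1
      · exact dft_slope_le l m hl.1 (val_mono _ _ (by simp [add_comm]) (h1 _ _).le)
    · subst h; rw [dft_slope_self m hm.1]
  have := pow_sub_pos m hm.1
  unfold dft at key
  unfold wslope at key ⊢
  rw [div_le_iff₀ this]
  linarith

theorem dft_anti (c c' : ℚ) (h : c ≤ c') (t : Word r) : dft c' t ≤ dft c t := by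
  have := one_le_pow_base (r := r) t.length
  unfold dft
  nlinarith

theorem dft_pre_flatten (c : ℚ) (L : List (Word r))
    (h : ∀ m ∈ L, IsLyndon m ∧ wslope m ≤ c) :
    ∀ t, t <+: L.flatten → dft c t ≤ 0 := by
  induction L with
  | nil =>
    intro t ht
    simp at ht
    subst ht
    rw [dft_nil]
  | cons m L ih =>
    intro t ht
    obtain ⟨hm, hc⟩ := h m (by simp)
    have hpre : ∀ t, t <+: m → dft c t ≤ 0 := fun t ht =>
      (dft_anti _ _ hc t).trans (dft_pre_le m t hm ht)
    rw [List.flatten_cons] at ht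
    obtain ⟨s, hs⟩ := ht
    rcases List.append_eq_append_iff.1 hs with ⟨d, hd, hd'⟩ | ⟨d, hd, hd'⟩
    · exact hpre t ⟨d, hd.symm⟩
    · rw [hd, dft_append]
      have h1 := ih (fun m hm => h m (List.mem_cons_of_mem _ hm)) d ⟨s, hd'.symm⟩
      have h2 := hpre m (List.prefix_refl m)
      have h3 : 0 < base r ^ d.length := pow_pos base_pos _
      nlinarith

/-- The largest shuffle of a Lyndon word with a nonincreasing product of smaller Lyndon words is
the concatenation. -/
theorem shuf_le_append (l : Word r) (hl : IsLyndon l) (L : List (Word r))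
    (hL : ∀ m ∈ L, IsLyndon m ∧ m ≤ l) (z : Word r) (h : Shuf l L.flatten z) :
    z ≤ l ++ L.flatten := by
  have h1 := dft_shuf (wslope l) z.length l L.flatten z rfl h
    (fun t ht => dft_pre_le l t hl ht)
    (dft_pre_flatten _ L fun m hm =>
      ⟨(hL m hm).1, slope_mono m l (hL m hm).1 hl (hL m hm).2⟩)
  rw [dft_slope_self l hl.1, zero_add] at h1
  have h2 : dft (wslope l) (l ++ L.flatten) = dft (wslope l) L.flatten := by
    rw [dft_append, dft_slope_self l hl.1]; ring
  rw [← h2] at h1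
  have hlen : z.length = (l ++ L.flatten).length := h.perm.length_eq
  by_contra h3
  have h4 := val_strictMono _ _ hlen.symm (not_le.1 h3)
  unfold dft at h1
  rw [hlen] at h1
  linarith

/-! ### Operators on the shuffle algebra -/

theorem shuffle_single (p : Fin r → Fin r → ℤ) (w x : Word r) (c d : K) :
    shuffle p (Finsupp.single w c) (Finsupp.single x d)
      = (c * d) • shAux p w.reverse x.reverse := by
  unfold shuffle
  rw [Finsupp.sum_single_index, Finsupp.sum_single_index]
  · simp
  · rw [Finsupp.sum_single_index] <;> simp

theorem shuffle_add_left (p : Fin r → Fin r → ℤ) (f f' g : FA r) :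
    shuffle p (f + f') g = shuffle p f g + shuffle p f' g := by
  unfold shuffle
  rw [Finsupp.sum_add_index']
  · intro w; simp
  · intro w c c'
    rw [← Finsupp.sum_add]
    simp only [add_mul, add_smul]

theorem shuffle_add_right (p : Fin r → Fin r → ℤ) (f g g' : FA r) :
    shuffle p f (g + g') = shuffle p f g + shuffle p f g' := by
  unfold shuffle
  rw [← Finsupp.sum_add]
  refine Finsupp.sum_congr fun w _ => ?_
  rw [Finsupp.sum_add_index']
  · intro w; simp
  · intro w c c'
    simp only [mul_add, add_smul]

theorem shuffle_smul_left (p : Fin r → Fin r → ℤ) (c : K) (f g : FA r) :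
    shuffle p (c • f) g = c • shuffle p f g := by
  unfold shuffle
  rw [Finsupp.sum_smul_index', Finsupp.smul_sum]
  · refine Finsupp.sum_congr fun w _ => ?_
    rw [Finsupp.smul_sum]
    simp only [smul_smul, smul_eq_mul, mul_assoc]
  · intro w; simp

theorem shuffle_smul_right (p : Fin r → Fin r → ℤ) (c : K) (f g : FA r) :
    shuffle p f (c • g) = c • shuffle p f g := by
  unfold shuffle
  rw [Finsupp.smul_sum]
  refine Finsupp.sum_congr fun w _ => ?_
  rw [Finsupp.sum_smul_index', Finsupp.smul_sum]
  · simp only [smul_smul, smul_eq_mul, mul_left_comm]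
  · intro w; simp

theorem shuffle_zero_left (p : Fin r → Fin r → ℤ) (g : FA r) : shuffle p 0 g = 0 := by
  simp [shuffle]

theorem shuffle_zero_right (p : Fin r → Fin r → ℤ) (f : FA r) : shuffle p f 0 = 0 := by
  simp [shuffle]

/-- Deletion of the last letter `b`. -/
def dR (b : Fin r) : FA r →ₗ[K] FA r :=
  Finsupp.lcomapDomain (fun u : Word r => u ++ [b]) (List.append_left_injective [b])

/-- Deletion of the first letter `a`. -/
def dL (a : Fin r) : FA r →ₗ[K] FA r :=
  Finsupp.lcomapDomain (fun u : Word r => a :: u) (List.cons_injective)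

/-- Rescaling of words by a character. -/
def scl (m : Fin r → K) (f : FA r) : FA r :=
  Finsupp.onFinset f.support (fun w => (w.map m).prod * f w) (by
    intro w hw
    rw [Finsupp.mem_support_iff]
    exact right_ne_zero_of_mul hw)

theorem dR_apply (b : Fin r) (f : FA r) (y : Word r) : dR b f y = f (y ++ [b]) := rfl

theorem dL_apply (a : Fin r) (f : FA r) (y : Word r) : dL a f y = f (a :: y) := rfl

theorem scl_apply (m : Fin r → K) (f : FA r) (y : Word r) :
    scl m f y = (y.map m).prod * f y := rfl

theorem scl_add (m : Fin r → K) (f g : FA r) : scl m (f + g) = scl m f + scl m g := by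
  ext y; simp only [scl_apply, Finsupp.add_apply, mul_add]

theorem scl_smul (m : Fin r → K) (c : K) (f : FA r) : scl m (c • f) = c • scl m f := by
  ext y; simp only [scl_apply, Finsupp.smul_apply, smul_eq_mul]; ring

theorem scl_zero (m : Fin r → K) : scl m (0 : FA r) = 0 := by
  ext y; simp [scl_apply]

theorem scl_single (m : Fin r → K) (w : Word r) (c : K) :
    scl m (Finsupp.single w c) = (w.map m).prod • Finsupp.single w c := by
  ext y
  rw [scl_apply, Finsupp.smul_apply, smul_eq_mul]
  by_cases h : w = y
  · subst h; rfl
  · rw [Finsupp.single_eq_of_ne (Ne.symm h)]; simp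

theorem dR_scl (m : Fin r → K) (b : Fin r) (f : FA r) :
    dR b (scl m f) = m b • scl m (dR b f) := by
  ext y
  simp only [dR_apply, scl_apply, Finsupp.smul_apply, smul_eq_mul, List.map_append,
    List.prod_append, List.map_cons, List.map_nil, List.prod_singleton]
  ring

theorem dL_scl (m : Fin r → K) (b : Fin r) (f : FA r) :
    dL b (scl m f) = m b • scl m (dL b f) := by
  ext y
  simp only [dL_apply, scl_apply, Finsupp.smul_apply, smul_eq_mul, List.map_cons,
    List.prod_cons]
  ring

theorem scl_comm (m m' : Fin r → K) (f : FA r) : scl m (scl m' f) = scl m' (scl m f) := by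
  ext y; simp only [scl_apply]; ring

theorem dL_dR (a b : Fin r) (f : FA r) : dL a (dR b f) = dR b (dL a f) := by
  ext y
  rfl

theorem dR_single_nil (b : Fin r) (c : K) : dR b (Finsupp.single ([] : Word r) c) = 0 := by
  ext y
  rw [dR_apply, Finsupp.single_eq_of_ne (by simp)]
  rfl

theorem dR_single_snoc (a b : Fin r) (w : Word r) (c : K) :
    dR b (Finsupp.single (w ++ [a]) c) = if a = b then Finsupp.single w c else 0 := by
  ext y
  rw [dR_apply, Finsupp.single_apply]
  split_ifs with h1 h2 h2
  · obtain ⟨h3, h4⟩ := List.append_inj' h1 rfl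
    subst h3; simp
  · obtain ⟨h3, h4⟩ := List.append_inj' h1 rfl
    exact absurd (by simpa using h4) h2
  · subst h2
    rw [Finsupp.single_eq_of_ne]
    rintro rfl
    exact h1 rfl
  · rfl

theorem dL_single_nil (b : Fin r) (c : K) : dL b (Finsupp.single ([] : Word r) c) = 0 := by
  ext y
  rw [dL_apply, Finsupp.single_eq_of_ne (by simp)]
  rfl

theorem dL_single_cons (a b : Fin r) (w : Word r) (c : K) :
    dL b (Finsupp.single (a :: w) c) = if a = b then Finsupp.single w c else 0 := by
  ext y
  rw [dL_apply, Finsupp.single_apply]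
  split_ifs with h1 h2 h2
  · obtain ⟨h3, h4⟩ := List.cons.inj h1
    subst h4; simp
  · exact absurd (List.cons.inj h1).1 h2
  · subst h2
    rw [Finsupp.single_eq_of_ne]
    rintro rfl
    exact h1 rfl
  · rfl

theorem dR_mapDomain (a b : Fin r) (f : FA r) :
    dR b (Finsupp.mapDomain (fun u => u ++ [a]) f) = if a = b then f else 0 := by
  induction f using Finsupp.induction_linear with
  | zero => simp
  | add f g hf hg =>
    rw [Finsupp.mapDomain_add, map_add, hf, hg]
    split_ifs <;> simp
  | single w c => rw [Finsupp.mapDomain_single, dR_single_snoc]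

/-- The character `i ↦ q^{-(α_i, α_b)}`. -/
def chR (p : Fin r → Fin r → ℤ) (b : Fin r) : Fin r → K := fun i => qq ^ (-(p i b))

/-- The character `i ↦ q^{-(α_a, α_i)}`. -/
def chL (p : Fin r → Fin r → ℤ) (a : Fin r) : Fin r → K := fun i => qq ^ (-(p a i))

theorem qq_ne_zero : qq ≠ 0 := RatFunc.X_ne_zero

theorem chR_prod (p : Fin r → Fin r → ℤ) (b : Fin r) (w : Word r) :
    (w.map (chR p b)).prod = qq ^ (-(pairW p w [b])) := by
  induction w with
  | nil => simp [pairW]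
  | cons a w ih =>
    have h : pairW p (a :: w) [b] = p a b + pairW p w [b] := by simp [pairW]
    rw [List.map_cons, List.prod_cons, ih, h, neg_add, zpow_add₀ qq_ne_zero]
    rfl

theorem shAux_nil_left (p : Fin r → Fin r → ℤ) (x : Word r) :
    shAux p [] x = Finsupp.single x.reverse 1 := by
  rw [shAux]

theorem shAux_nil_right (p : Fin r → Fin r → ℤ) (w : Word r) :
    shAux p w [] = Finsupp.single w.reverse 1 := by
  cases w with
  | nil => rw [shAux]
  | cons a w => rw [shAux]; simp

theorem shAux_cons (p : Fin r → Fin r → ℤ) (a b : Fin r) (w x : Word r) :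
    shAux p (a :: w) (b :: x) =
      Finsupp.mapDomain (fun u => u ++ [a]) (shAux p w (b :: x))
      + (qq ^ (-(pairW p (a :: w) [b]))) •
          Finsupp.mapDomain (fun u => u ++ [b]) (shAux p (a :: w) x) := by
  rw [shAux]

theorem pairW_reverse (p : Fin r → Fin r → ℤ) (b : Fin r) (w : Word r) :
    pairW p w.reverse [b] = pairW p w [b] := by
  unfold pairW
  exact ((List.reverse_perm w).map _).sum_eq

theorem dR_shuffle_single (p : Fin r → Fin r → ℤ) (c : Fin r) (w x : Word r) :
    dR c (shuffle p (Finsupp.single w.reverse 1) (Finsupp.single x.reverse 1)) =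
      shuffle p (dR c (Finsupp.single w.reverse 1)) (Finsupp.single x.reverse 1)
      + shuffle p (scl (chR p c) (Finsupp.single w.reverse 1))
          (dR c (Finsupp.single x.reverse 1)) := by
  rw [scl_single, chR_prod, pairW_reverse]
  cases w with
  | nil =>
    cases x with
    | nil =>
      simp [shuffle_single, dR_single_nil, shuffle_zero_left, shuffle_zero_right, shAux_nil_left]
    | cons b x =>
      simp only [List.reverse_nil, shuffle_single, shAux_nil_left, dR_single_nil, shuffle_zero_left,
        List.reverse_reverse, List.reverse_cons, dR_single_snoc, mul_one, one_smul, zero_add]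
      by_cases h : b = c
      · simp [h, pairW, shuffle_single, shAux_nil_left]
      · simp [h, shuffle_zero_right]
  | cons a w =>
    cases x with
    | nil =>
      simp only [List.reverse_nil, shuffle_single, shAux_nil_right, dR_single_nil,
        shuffle_zero_right, List.reverse_reverse, List.reverse_cons, dR_single_snoc, mul_one,
        one_smul, add_zero]
      by_cases h : a = c
      · simp [h, shuffle_single, shAux_nil_right]
      · simp [h, shuffle_zero_left]
    | cons b x =>
      rw [shuffle_single, List.reverse_reverse, List.reverse_reverse, shAux_cons, mul_one, one_smul,
        map_add, map_smul, dR_mapDomain, dR_mapDomain, shuffle_smul_left, List.reverse_cons,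
        List.reverse_cons, dR_single_snoc, dR_single_snoc]
      congr 1
      · by_cases h : a = c
        · simp [h, shuffle_single]
        · simp [h, shuffle_zero_left]
      · by_cases h : b = c
        · simp [h, shuffle_single]
        · simp [h, shuffle_zero_right]

theorem single_eq_smul (w : Word r) (c : K) :
    (Finsupp.single w c : FA r) = c • Finsupp.single w.reverse.reverse 1 := by
  simp

theorem dR_shuffle (p : Fin r → Fin r → ℤ) (c : Fin r) (f g : FA r) :
    dR c (shuffle p f g) = shuffle p (dR c f) g + shuffle p (scl (chR p c) f) (dR c g) := by
  induction f using Finsupp.induction_linear with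
  | zero => simp only [shuffle_zero_left, map_zero, scl_zero, add_zero]
  | add f f' hf hf' =>
    simp only [shuffle_add_left, map_add, scl_add, hf, hf']
    abel
  | single w d =>
    induction g using Finsupp.induction_linear with
    | zero => simp only [shuffle_zero_right, map_zero, add_zero]
    | add g g' hg hg' =>
      simp only [shuffle_add_right, map_add, hg, hg']
      abel
    | single x e =>
      rw [single_eq_smul w d, single_eq_smul x e]
      simp only [shuffle_smul_left, shuffle_smul_right, map_smul, scl_smul]
      rw [dR_shuffle_single]
      simp only [smul_add]

theorem shAux_at_nil (p : Fin r → Fin r → ℤ) (w x : Word r) :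
    shAux p w x [] = if w = [] ∧ x = [] then 1 else 0 := by
  cases w with
  | nil =>
    rw [shAux_nil_left, Finsupp.single_apply]
    simp
  | cons a w =>
    cases x with
    | nil =>
      rw [shAux_nil_right, Finsupp.single_apply]
      simp
    | cons b x =>
      have h : ∀ (d : Fin r) (f : FA r), Finsupp.mapDomain (fun u => u ++ [d]) f [] = 0 := by
        intro d f
        refine Finsupp.mapDomain_of_notMem_range _ _ ?_
        rintro ⟨u, hu⟩
        simp at hu
      rw [shAux_cons, Finsupp.add_apply, Finsupp.smul_apply, h, h]
      simp

theorem shuffle_at_nil (p : Fin r → Fin r → ℤ) (f g : FA r) :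
    shuffle p f g [] = f [] * g [] := by
  induction f using Finsupp.induction_linear with
  | zero => simp [shuffle_zero_left]
  | add f f' hf hf' => simp only [shuffle_add_left, Finsupp.add_apply, hf, hf', add_mul]
  | single w d =>
    induction g using Finsupp.induction_linear with
    | zero => simp [shuffle_zero_right]
    | add g g' hg hg' => simp only [shuffle_add_right, Finsupp.add_apply, hg, hg', mul_add]
    | single x e =>
      rw [shuffle_single, Finsupp.smul_apply, shAux_at_nil, Finsupp.single_apply,
        Finsupp.single_apply]
      by_cases h1 : w = [] <;> by_cases h2 : x = [] <;> simp [h1, h2]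

theorem scl_shuffle (p : Fin r → Fin r → ℤ) (m : Fin r → K) (f g : FA r) :
    scl m (shuffle p f g) = shuffle p (scl m f) (scl m g) := by
  ext y
  induction y using List.reverseRecOn generalizing f g with
  | nil => simp [scl_apply, shuffle_at_nil]
  | append_singleton y b ih =>
    rw [← dR_apply, ← dR_apply, dR_scl, dR_shuffle, dR_shuffle, dR_scl, dR_scl, scl_add,
      shuffle_smul_left, shuffle_smul_right, scl_comm (chR p b) m, Finsupp.smul_apply,
      Finsupp.add_apply, Finsupp.add_apply, ih, ih, Finsupp.smul_apply, Finsupp.smul_apply,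
      smul_add]

theorem dL_shuffle (p : Fin r → Fin r → ℤ) (a : Fin r) (f g : FA r) :
    dL a (shuffle p f g) = shuffle p (dL a f) (scl (chL p a) g) + shuffle p f (dL a g) := by
  ext y
  induction y using List.reverseRecOn generalizing f g with
  | nil =>
    have h := DFunLike.congr_fun (dR_shuffle p a f g) []
    rw [Finsupp.add_apply, shuffle_at_nil, shuffle_at_nil] at h
    rw [Finsupp.add_apply, shuffle_at_nil, shuffle_at_nil]
    simpa [scl_apply, dL_apply, dR_apply] using h
  | append_singleton y b ih =>
    have e : chR p b a = chL p a b := rfl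
    rw [← dR_apply, ← dR_apply, ← dL_dR, dR_shuffle, map_add, map_add, dR_shuffle, dR_shuffle,
      Finsupp.add_apply, ih, ih, dL_scl, dR_scl, shuffle_smul_left, shuffle_smul_right, e, dL_dR,
      dL_dR]
    simp only [Finsupp.add_apply]
    ring

/-! ### Stability of `𝒰` -/

theorem InU.zero (p : Fin r → Fin r → ℤ) : InU p (0 : FA r) := by
  have := InU.smul (0 : K) (InU.one (p := p))
  rwa [zero_smul] at this

theorem InU.scl {p : Fin r → Fin r → ℤ} (m : Fin r → K) {f : FA r} (h : InU p f) :
    InU p (scl m f) := by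
  induction h with
  | letter i => rw [scl_single]; exact InU.smul _ (InU.letter i)
  | one => rw [scl_single]; exact InU.smul _ InU.one
  | add _ _ h1 h2 => rw [scl_add]; exact InU.add h1 h2
  | smul c _ h1 => rw [scl_smul]; exact InU.smul c h1
  | mul _ _ h1 h2 => rw [scl_shuffle]; exact InU.mul h1 h2

theorem InU.dR {p : Fin r → Fin r → ℤ} (b : Fin r) {f : FA r} (h : InU p f) :
    InU p (dR b f) := by
  induction h with
  | letter i =>
    have := dR_single_snoc i b [] 1
    rw [List.nil_append] at this
    rw [this]
    split_ifs
    · exact InU.one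
    · exact InU.zero p
  | one => rw [dR_single_nil]; exact InU.zero p
  | add _ _ h1 h2 => rw [map_add]; exact InU.add h1 h2
  | smul c _ h1 => rw [map_smul]; exact InU.smul c h1
  | mul h1 h2 h3 h4 =>
    rw [dR_shuffle]
    exact InU.add (InU.mul h3 h2) (InU.mul (h1.scl _) h4)

theorem InU.dL {p : Fin r → Fin r → ℤ} (b : Fin r) {f : FA r} (h : InU p f) :
    InU p (dL b f) := by
  induction h with
  | letter i =>
    rw [dL_single_cons]
    split_ifs
    · exact InU.one
    · exact InU.zero p
  | one => rw [dL_single_nil]; exact InU.zero p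
  | add _ _ h1 h2 => rw [map_add]; exact InU.add h1 h2
  | smul c _ h1 => rw [map_smul]; exact InU.smul c h1
  | mul h1 h2 h3 h4 =>
    rw [dL_shuffle]
    exact InU.add (InU.mul h3 (h2.scl _)) (InU.mul h1 h4)

/-! ### Factors of good words are good -/

theorem deg_perm (w x : Word r) (h : deg w = deg x) : w.Perm x :=
  List.perm_iff_count.2 fun a => congrFun h a

theorem good_tail {p : Fin r → Fin r → ℤ} (a : Fin r) (g : Word r) (h : IsGood p (a :: g)) :
    IsGood p g := by
  obtain ⟨u, hu, ⟨ν, hν⟩, h1, h2⟩ := h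
  refine ⟨dL a u, hu.dL a, ⟨deg g, ?_⟩, h1, ?_⟩
  · intro w hw
    have hw' : a :: w ∈ u.support := by
      rw [Finsupp.mem_support_iff] at hw ⊢; exact hw
    have h3 := (hν _ hw').trans (hν (a :: g) (Finsupp.mem_support_iff.2 h1)).symm
    have h4 := ((deg_perm _ _ h3).cons_inv)
    funext i
    exact h4.count_eq i
  · intro w hw
    have hw' : a :: w ∈ u.support := by
      rw [Finsupp.mem_support_iff] at hw ⊢; exact hw
    have h3 := h2 _ hw'
    rw [wle_iff] at h3 ⊢
    rcases cons_le_iff.1 h3 with h4 | h4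
    · exact absurd h4 (lt_irrefl _)
    · exact h4.2

theorem good_init {p : Fin r → Fin r → ℤ} (a : Fin r) (g : Word r) (h : IsGood p (g ++ [a])) :
    IsGood p g := by
  obtain ⟨u, hu, ⟨ν, hν⟩, h1, h2⟩ := h
  have key : ∀ w ∈ (dR a u).support, w ++ [a] ∈ u.support ∧ w.Perm g := by
    intro w hw
    have hw' : w ++ [a] ∈ u.support := by
      rw [Finsupp.mem_support_iff] at hw ⊢; exact hw
    have h3 := (hν _ hw').trans (hν (g ++ [a]) (Finsupp.mem_support_iff.2 h1)).symm
    exact ⟨hw', (List.perm_append_right_iff [a]).1 (deg_perm _ _ h3)⟩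
  refine ⟨dR a u, hu.dR a, ⟨deg g, ?_⟩, h1, ?_⟩
  · intro w hw
    funext i
    exact (key w hw).2.count_eq i
  · intro w hw
    obtain ⟨hw', hp⟩ := key w hw
    have h3 := h2 _ hw'
    rw [wle_iff] at h3 ⊢
    by_contra h4
    exact absurd (append_lt_append_of_length g w (not_le.1 h4) hp.length_eq.le [a] [a])
      (not_lt.2 h3)

theorem good_factor {p : Fin r → Fin r → ℤ} (x l y : Word r) (h : IsGood p (x ++ (l ++ y))) :
    IsGood p l := by
  have h1 : IsGood p (l ++ y) := by
    induction x with
    | nil => exact h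
    | cons a x ih => exact ih (good_tail a _ h)
  induction y using List.reverseRecOn with
  | nil => simpa using h1
  | append_singleton y b ih =>
    have h2 : IsGood p (l ++ y) := by
      apply good_init b
      simpa using h1
    refine ih ?_ h2
    have h3 : x ++ (l ++ (y ++ [b])) = (x ++ (l ++ y)) ++ [b] := by simp
    rw [h3] at h
    exact good_init b _ h

theorem mem_flatten_factor (L : List (Word r)) (l : Word r) (h : l ∈ L) :
    ∃ x y, L.flatten = x ++ (l ++ y) := by
  obtain ⟨s, t, rfl⟩ := List.append_of_mem h
  exact ⟨s.flatten, t.flatten, by simp⟩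

/-! ### Positivity of shuffle coefficients -/

/-- Laurent polynomials with positive value at `q = 1`. -/
def PosK (c : K) : Prop :=
  ∃ (n : ℕ) (P : Polynomial ℚ), 0 < P.eval 1 ∧ c * qq ^ n = algebraMap (Polynomial ℚ) K P

theorem PosK.ne_zero {c : K} (h : PosK c) : c ≠ 0 := by
  rintro rfl
  obtain ⟨n, P, h1, h2⟩ := h
  rw [zero_mul] at h2
  have h3 : P = 0 := by
    apply RatFunc.algebraMap_injective ℚ
    rw [← h2, map_zero]
  rw [h3] at h1
  simp at h1

theorem PosK.add {c d : K} (hc : PosK c) (hd : PosK d) : PosK (c + d) := by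
  obtain ⟨n, P, h1, h2⟩ := hc
  obtain ⟨m, Q, h3, h4⟩ := hd
  refine ⟨n + m, P * Polynomial.X ^ m + Q * Polynomial.X ^ n, ?_, ?_⟩
  · simp only [Polynomial.eval_add, Polynomial.eval_mul, Polynomial.eval_pow, Polynomial.eval_X,
      one_pow, mul_one]
    exact add_pos h1 h3
  · rw [map_add, map_mul, map_mul, map_pow, map_pow, RatFunc.algebraMap_X, ← h2, ← h4, pow_add]
    ring

theorem PosK.zpow_mul {c : K} (hc : PosK c) (k : ℤ) : PosK (qq ^ k * c) := by
  obtain ⟨n, P, h1, h2⟩ := hc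
  rcases Int.eq_nat_or_neg k with ⟨m, rfl | rfl⟩
  · refine ⟨n, P * Polynomial.X ^ m, by simpa using h1, ?_⟩
    rw [map_mul, map_pow, RatFunc.algebraMap_X, ← h2, zpow_natCast]
    ring
  · refine ⟨n + m, P, h1, ?_⟩
    rw [← h2, zpow_neg, zpow_natCast, pow_add]
    have := pow_ne_zero m qq_ne_zero
    field_simp

theorem PosK.one : PosK 1 := ⟨0, 1, by simp, by simp⟩

theorem chL_prod (p : Fin r → Fin r → ℤ) (a : Fin r) (w : Word r) :
    ∃ k : ℤ, (w.map (chL p a)).prod = qq ^ k := by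
  induction w with
  | nil => exact ⟨0, by simp⟩
  | cons b w ih =>
    obtain ⟨k, hk⟩ := ih
    refine ⟨-(p a b) + k, ?_⟩
    rw [List.map_cons, List.prod_cons, hk, zpow_add₀ qq_ne_zero]
    rfl

/-- Coefficient of a word in the shuffle of two words. -/
def cf (p : Fin r → Fin r → ℤ) (w x z : Word r) : K :=
  shuffle p (Finsupp.single w 1) (Finsupp.single x 1) z

theorem cf_pos (p : Fin r → Fin r → ℤ) (w x z : Word r) :
    (Shuf w x z → PosK (cf p w x z)) ∧ (¬ Shuf w x z → cf p w x z = 0) := by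
  induction z generalizing w x with
  | nil =>
    have e : cf p w x [] = if w = [] ∧ x = [] then 1 else 0 := by
      unfold cf
      rw [shuffle_at_nil, Finsupp.single_apply, Finsupp.single_apply]
      by_cases h1 : w = [] <;> by_cases h2 : x = [] <;> simp [h1, h2]
    rw [e]
    constructor
    · intro h
      cases h
      simpa using PosK.one
    · intro h
      rw [if_neg]
      rintro ⟨rfl, rfl⟩
      exact h Shuf.nil
  | cons a z ih =>
    have e : cf p w x (a :: z) = shuffle p (dL a (Finsupp.single w 1))
        (scl (chL p a) (Finsupp.single x 1)) z
        + shuffle p (Finsupp.single w 1) (dL a (Finsupp.single x 1)) z := by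
      unfold cf
      rw [← dL_apply, dL_shuffle, Finsupp.add_apply]
    obtain ⟨k, hk⟩ := chL_prod p a x
    rw [scl_single, hk, shuffle_smul_right, Finsupp.smul_apply, smul_eq_mul] at e
    -- the two contributions
    set A := shuffle p (dL a (Finsupp.single w 1)) (Finsupp.single x 1) z with hA
    set B := shuffle p (Finsupp.single w 1) (dL a (Finsupp.single x 1)) z with hB
    have hA' : (∃ w', w = a :: w' ∧ A = cf p w' x z) ∨ ((∀ w', w ≠ a :: w') ∧ A = 0) := by
      cases w with
      | nil =>
        right
        refine ⟨by simp, ?_⟩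
        rw [hA, dL_single_nil, shuffle_zero_left]; rfl
      | cons b w =>
        rw [dL_single_cons] at hA
        by_cases h : b = a
        · left
          rw [if_pos h] at hA
          exact ⟨w, by rw [h], hA⟩
        · right
          rw [if_neg h, shuffle_zero_left] at hA
          exact ⟨by simp [h], hA⟩
    have hB' : (∃ x', x = a :: x' ∧ B = cf p w x' z) ∨ ((∀ x', x ≠ a :: x') ∧ B = 0) := by
      cases x with
      | nil =>
        right
        refine ⟨by simp, ?_⟩
        rw [hB, dL_single_nil, shuffle_zero_right]; rfl
      | cons b x =>
        rw [dL_single_cons] at hB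
        by_cases h : b = a
        · left
          rw [if_pos h] at hB
          exact ⟨x, by rw [h], hB⟩
        · right
          rw [if_neg h, shuffle_zero_right] at hB
          exact ⟨by simp [h], hB⟩
    have cA : (PosK A ∧ Shuf w x (a :: z)) ∨ (A = 0 ∧ ∀ w', w = a :: w' → ¬ Shuf w' x z) := by
      rcases hA' with ⟨w', h1, h2⟩ | ⟨h1, h2⟩
      · by_cases h3 : Shuf w' x z
        · left
          rw [h2, h1]
          exact ⟨(ih w' x).1 h3, Shuf.left a h3⟩
        · right
          refine ⟨by rw [h2, (ih w' x).2 h3], ?_⟩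
          intro w'' h4
          rw [h1] at h4
          rwa [← (List.cons.inj h4).2]
      · right
        exact ⟨h2, fun w' h3 => absurd h3 (h1 w')⟩
    have cB : (PosK B ∧ Shuf w x (a :: z)) ∨ (B = 0 ∧ ∀ x', x = a :: x' → ¬ Shuf w x' z) := by
      rcases hB' with ⟨x', h1, h2⟩ | ⟨h1, h2⟩
      · by_cases h3 : Shuf w x' z
        · left
          rw [h2, h1]
          exact ⟨(ih w x').1 h3, Shuf.right a h3⟩
        · right
          refine ⟨by rw [h2, (ih w x').2 h3], ?_⟩
          intro x'' h4
          rw [h1] at h4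
          rwa [← (List.cons.inj h4).2]
      · right
        exact ⟨h2, fun x' h3 => absurd h3 (h1 x')⟩
    rw [e]
    rcases cA with ⟨h1, h2⟩ | ⟨h1, h2⟩ <;> rcases cB with ⟨h3, h4⟩ | ⟨h3, h4⟩
    · exact ⟨fun _ => (h1.zpow_mul k).add h3, fun h => absurd h2 h⟩
    · rw [h3, add_zero]
      exact ⟨fun _ => h1.zpow_mul k, fun h => absurd h2 h⟩
    · rw [h1, mul_zero, zero_add]
      exact ⟨fun _ => h3, fun h => absurd h4 h⟩
    · rw [h1, h3, mul_zero, zero_add]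
      refine ⟨?_, fun _ => rfl⟩
      intro h
      cases h with
      | left _ h5 => exact absurd h5 (h2 _ rfl)
      | right _ h5 => exact absurd h5 (h4 _ rfl)

theorem shuffle_apply (p : Fin r → Fin r → ℤ) (f g : FA r) (z : Word r) :
    shuffle p f g z = ∑ w ∈ f.support, ∑ x ∈ g.support, f w * g x * cf p w x z := by
  unfold cf
  simp only [shuffle_single, mul_one, one_smul]
  unfold shuffle
  rw [Finsupp.sum, Finsupp.finsetSum_apply]
  refine Finset.sum_congr rfl fun w _ => ?_
  rw [Finsupp.sum, Finsupp.finsetSum_apply]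
  rfl

/-! ### Products of good words -/

theorem good_mul {p : Fin r → Fin r → ℤ} (l w : Word r) (hl : IsGood p l) (hw : IsGood p w)
    (hmax : ∀ z, Shuf l w z → z ≤ l ++ w) : IsGood p (l ++ w) := by
  obtain ⟨f, hf, ⟨ν, hν⟩, hf1, hf2⟩ := hl
  obtain ⟨g, hg, ⟨μ, hμ⟩, hg1, hg2⟩ := hw
  have hlf : l ∈ f.support := Finsupp.mem_support_iff.2 hf1
  have hwg : w ∈ g.support := Finsupp.mem_support_iff.2 hg1
  have hpf : ∀ y ∈ f.support, y.Perm l := fun y hy =>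
    deg_perm _ _ ((hν y hy).trans (hν l hlf).symm)
  have hpg : ∀ y ∈ g.support, y.Perm w := fun y hy =>
    deg_perm _ _ ((hμ y hy).trans (hμ w hwg).symm)
  have key : ∀ y ∈ f.support, ∀ x ∈ g.support, ∀ z, Shuf y x z →
      z ≤ l ++ w ∧ (z = l ++ w → y = l ∧ x = w) := by
    intro y hy x hx z hz
    obtain ⟨z', h1, h2, h3⟩ := hz.mono l w (hpf y hy).length_eq.symm (hpg x hx).length_eq.symm
      ((wle_iff _ _).1 (hf2 y hy)) ((wle_iff _ _).1 (hg2 x hx))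
    have h4 := hmax z' h1
    refine ⟨h2.trans h4, fun h5 => h3 (le_antisymm h2 ?_)⟩
    rw [h5]; exact h4
  have supp : ∀ z ∈ (shuffle p f g).support, ∃ y ∈ f.support, ∃ x ∈ g.support, Shuf y x z := by
    intro z hz
    by_contra hcon
    push Not at hcon
    rw [Finsupp.mem_support_iff] at hz
    apply hz
    rw [shuffle_apply]
    refine Finset.sum_eq_zero fun y hy => Finset.sum_eq_zero fun x hx => ?_
    rw [(cf_pos p y x z).2 (hcon y hy x hx), mul_zero]
  refine ⟨shuffle p f g, InU.mul hf hg, ⟨deg (l ++ w), ?_⟩, ?_, ?_⟩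
  · intro z hz
    obtain ⟨y, hy, x, hx, h⟩ := supp z hz
    funext i
    exact (h.perm.trans ((hpf y hy).append (hpg x hx))).count_eq i
  · rw [shuffle_apply, Finset.sum_eq_single_of_mem l hlf, Finset.sum_eq_single_of_mem w hwg]
    · exact mul_ne_zero (mul_ne_zero hf1 hg1) ((cf_pos p l w _).1 (Shuf.append l w)).ne_zero
    · intro x hx hne
      rw [(cf_pos p l x _).2, mul_zero]
      intro h
      exact hne ((key l hlf x hx _ h).2 rfl).2
    · intro y hy hne
      refine Finset.sum_eq_zero fun x hx => ?_
      rw [(cf_pos p y x _).2, mul_zero]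
      intro h
      exact hne ((key y hy x hx _ h).2 rfl).1
  · intro z hz
    obtain ⟨y, hy, x, hx, h⟩ := supp z hz
    exact (wle_iff _ _).2 (key y hy x hx z h).1

theorem good_nil (p : Fin r → Fin r → ℤ) : IsGood p [] := by
  refine ⟨Finsupp.single [] 1, InU.one, ⟨deg [], ?_⟩, by simp, ?_⟩
  · intro w hw
    have := Finsupp.support_single_subset hw
    rw [Finset.mem_singleton] at this
    rw [this]
  · intro w hw
    have := Finsupp.support_single_subset hw
    rw [Finset.mem_singleton] at this
    exact Or.inr this

theorem good_flatten (p : Fin r → Fin r → ℤ) (L : List (Word r))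
    (hL : ∀ l ∈ L, IsGood p l ∧ IsLyndon l)
    (hc : List.IsChain (fun a b : Word r => b ≤ a) L) : IsGood p L.flatten := by
  induction L with
  | nil => exact good_nil p
  | cons l L ih =>
    have h1 := ih (fun m hm => hL m (List.mem_cons_of_mem _ hm)) hc.tail
    rw [List.flatten_cons]
    obtain ⟨h2, h3⟩ := hL l (by simp)
    refine good_mul l L.flatten h2 h1 (shuf_le_append l h3 L ?_)
    intro m hm
    have hpw : List.Pairwise (fun a b : Word r => b ≤ a) (l :: L) := by
      have : IsTrans (Word r) (fun a b : Word r => b ≤ a) := ⟨fun a b c h h' => le_trans h' h⟩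
      exact List.isChain_iff_pairwise.1 hc
    exact ⟨(hL m (List.mem_cons_of_mem _ hm)).2, (List.pairwise_cons.1 hpw).1 m hm⟩

/-- Proposition 3.6: a word is good if and only if it is a nonincreasing concatenation
of good Lyndon words. -/
theorem good_iff_nonincreasing_product_of_good_lyndon {r : ℕ} (hr : 1 ≤ r)
    (C : CartanData r) (g : Word r) :
    IsGood C.p g ↔
      ∃ L : List (Word r),
        (∀ l ∈ L, IsGood C.p l ∧ IsLyndon l) ∧
        List.Chain' (fun a b => wle b a) L ∧
        g = L.flatten := by
  constructor
  · intro h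
    obtain ⟨L, h1, h2, h3⟩ := lyndon_factorization g
    refine ⟨L, ?_, h2, h3⟩
    intro l hl
    obtain ⟨x, y, hxy⟩ := mem_flatten_factor L l hl
    refine ⟨good_factor x l y ?_, h1 l hl⟩
    rw [← hxy, ← h3]
    exact h
  · rintro ⟨L, h1, h2, rfl⟩
    refine good_flatten C.p L h1 ?_
    have h3 : (fun a b : Word r => wle b a) = fun a b : Word r => b ≤ a := by
      funext a b
      exact propext (wle_iff b a)
    rw [← h3]
    exact h2
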